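/- Let $C$ be a symmetric $n \times n$ real matrix. Then $\alpha_{Q_C}^{\mathrm{cop}} \le \alpha_C^{\mathrm{cop}}$, where $\alpha_{Q_C}^{\mathrm{cop}} = \inf\{ Q_C \bullet X : X \text{ symmetric } 2n \times 2n \text{ positive semidefinite},\ X_{ij} \ge 0 \text{ for all } i,j,\ \sum_{i,j} X_{ij} = 1 \}$ with $Q_C = \begin{pmatrix} C & -C \\ -C & C \end{pmatrix}$, and $\alpha_C^{\mathrm{cop}} = \inf\{ C \bullet U : U \text{ symmetric } n \times n \text{ positive semidefinite},\ U_{ij} \ge 0 \text{ for all } i,j,\ \sum_{i,j} U_{ij} = 1 \}$. -/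

import Mathlib

open Matrix

/-!
If `P` is a nonnegative matrix whose columns sum to one, then `U ↦ P U Pᵀ` preserves positive
semidefiniteness, nonnegativity of the entries and their total sum, and
`C • (P U Pᵀ) = (Pᵀ C P) • U`. So every value attained for `Pᵀ C P` is attained for `C`. Taking the
columns of `P` to be standard basis vectors makes `Pᵀ C P` any submatrix `C.submatrix e e`, and `C`
is the top left block of `Q_C`.
-/

variable {ι κ : Type*} [Fintype ι] [Fintype κ]

/-- The doubly nonnegative (positive semidefinite and entrywise nonnegative) matrices with total
sum one, the feasible set of the semidefinite bound on a standard quadratic program. -/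
def doublyNonnegSimplex (ι : Type*) [Fintype ι] : Set (Matrix ι ι ℝ) :=
  {X | X.PosSemidef ∧ (∀ i j, 0 ≤ X i j) ∧ ∑ i, ∑ j, X i j = 1}

/-- The bound `α_C^cop`: the infimum of `C • X` over the doubly nonnegative simplex. `C • X` is
written as the entrywise sum, which is `trace (C * X)` as `X` is symmetric. For an empty index type
the feasible set is empty and the value is the junk value `0`. -/
noncomputable def copBound (C : Matrix ι ι ℝ) : ℝ :=
  ⨅ X : doublyNonnegSimplex ι, ∑ i, ∑ j, C i j * X.1 i j

theorem posSemidef_iff_transpose_eq_and_dotProduct_mulVec_nonneg {X : Matrix ι ι ℝ} :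
    X.PosSemidef ↔ Xᵀ = X ∧ ∀ x : ι → ℝ, 0 ≤ x ⬝ᵥ X *ᵥ x := by
  simp only [posSemidef_iff_dotProduct_mulVec, IsHermitian, conjTranspose_eq_transpose_of_trivial,
    star_trivial]

theorem copBound_eq_sInf (C : Matrix ι ι ℝ) :
    copBound C = sInf {r : ℝ | ∃ X : Matrix ι ι ℝ, Xᵀ = X ∧ (∀ x : ι → ℝ, 0 ≤ x ⬝ᵥ X *ᵥ x) ∧
      (∀ i j, 0 ≤ X i j) ∧ (∑ i, ∑ j, X i j) = 1 ∧ r = ∑ i, ∑ j, C i j * X i j} := by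
  refine congrArg sInf (Set.ext fun r => ?_)
  simp only [Set.mem_range, Subtype.exists, doublyNonnegSimplex, Set.mem_ofPred_eq, exists_prop,
    posSemidef_iff_transpose_eq_and_dotProduct_mulVec_nonneg, and_assoc, eq_comm]

theorem doublyNonnegSimplex_nonempty [Nonempty ι] : (doublyNonnegSimplex ι).Nonempty := by
  classical
  obtain ⟨k⟩ := ‹Nonempty ι›
  have hk : (0 : ι → ℝ) ≤ Pi.single k 1 := Pi.single_nonneg.2 zero_le_one
  refine ⟨diagonal (Pi.single k 1), .diagonal hk, fun i j => ?_, ?_⟩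
  · rw [diagonal_apply]
    split_ifs
    exacts [hk i, le_rfl]
  · simp [diagonal_apply]

theorem le_sum_mul_of_mem_doublyNonnegSimplex {m : ℝ} {C X : Matrix ι ι ℝ}
    (hC : ∀ i j, m ≤ C i j) (hX : X ∈ doublyNonnegSimplex ι) :
    m ≤ ∑ i, ∑ j, C i j * X i j := by
  obtain ⟨-, hX0, hX1⟩ := hX
  calc
    m = ∑ i, ∑ j, m * X i j := by simp only [← Finset.mul_sum, hX1, mul_one]
    _ ≤ ∑ i, ∑ j, C i j * X i j := by gcongr with i _ j _; exacts [hX0 i j, hC i j]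

theorem bddBelow_range_sum_mul (C : Matrix ι ι ℝ) :
    BddBelow (Set.range fun X : doublyNonnegSimplex ι => ∑ i, ∑ j, C i j * X.1 i j) := by
  obtain ⟨m, hm⟩ := (Set.finite_range (Function.uncurry C)).bddBelow
  have hC (i j : ι) : m ≤ C i j := hm (Set.mem_range_self (i, j))
  exact ⟨m, Set.forall_mem_range.2 fun X => le_sum_mul_of_mem_doublyNonnegSimplex hC X.2⟩

theorem sum_mul_mul_mul_transpose {R : Type*} [CommSemiring R] (C : Matrix κ κ R)
    (P : Matrix κ ι R) (U : Matrix ι ι R) :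
    ∑ k, ∑ l, C k l * (P * U * Pᵀ) k l = ∑ i, ∑ j, (Pᵀ * C * P) i j * U i j := by
  simp only [← hadamard_apply, sum_hadamard_eq]
  calc
    trace (C * (P * U * Pᵀ)ᵀ) = trace (C * P * Uᵀ * Pᵀ) := by
      simp only [transpose_mul, transpose_transpose, Matrix.mul_assoc]
    _ = trace (Pᵀ * C * P * Uᵀ) := by
      rw [trace_mul_comm]
      simp only [Matrix.mul_assoc]

theorem mul_mul_transpose_mem_doublyNonnegSimplex {P : Matrix κ ι ℝ} {U : Matrix ι ι ℝ}
    (hP : ∀ k i, 0 ≤ P k i) (hP1 : ∀ i, ∑ k, P k i = 1) (hU : U ∈ doublyNonnegSimplex ι) :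
    P * U * Pᵀ ∈ doublyNonnegSimplex κ := by
  obtain ⟨hUpsd, hU0, hU1⟩ := hU
  refine ⟨?_, fun k l => ?_, ?_⟩
  · simpa only [conjTranspose_eq_transpose_of_trivial] using hUpsd.mul_mul_conjTranspose_same P
  · exact Finset.sum_nonneg fun j _ =>
      mul_nonneg (Finset.sum_nonneg fun i _ => mul_nonneg (hP k i) (hU0 i j)) (hP l j)
  · have hJ (i j : ι) : (Pᵀ * (of 1 : Matrix κ κ ℝ) * P) i j = 1 := by
      simp [mul_apply, hP1]
    simpa only [of_apply, Pi.one_apply, one_mul, hJ, hU1] using sum_mul_mul_mul_transpose (of 1) P U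

theorem copBound_le_copBound_transpose_mul_mul [Nonempty ι] (C : Matrix κ κ ℝ) {P : Matrix κ ι ℝ}
    (hP : ∀ k i, 0 ≤ P k i) (hP1 : ∀ i, ∑ k, P k i = 1) :
    copBound C ≤ copBound (Pᵀ * C * P) := by
  have : Nonempty (doublyNonnegSimplex ι) := doublyNonnegSimplex_nonempty.to_subtype
  refine le_ciInf fun U => ?_
  rw [← sum_mul_mul_mul_transpose]
  exact ciInf_le (bddBelow_range_sum_mul C)
    ⟨P * U.1 * Pᵀ, mul_mul_transpose_mem_doublyNonnegSimplex hP hP1 U.2⟩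

theorem stmt_9_general [Nonempty ι] (C : Matrix κ κ ℝ) (e : ι → κ) :
    copBound C ≤ copBound (C.submatrix e e) := by
  classical
  let P : Matrix κ ι ℝ := (1 : Matrix κ κ ℝ).submatrix id e
  have hP (k : κ) (i : ι) : 0 ≤ P k i := by
    simp only [P, submatrix_apply, id, one_apply]
    positivity
  have hP1 (i : ι) : ∑ k, P k i = 1 := by simp [P, one_apply]
  have hPCP : Pᵀ * C * P = C.submatrix e e := by
    ext i j
    simp [P, mul_apply, one_apply]
  exact hPCP ▸ copBound_le_copBound_transpose_mul_mul C hP hP1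

/-- Theorem 2 (first part): `α_{Q_C}^cop ≤ α_C^cop` for every symmetric `C`. -/
theorem stmt_9 (n : ℕ) (C : Matrix (Fin n) (Fin n) ℝ) (hC : Cᵀ = C) :
    sInf {r : ℝ | ∃ X : Matrix (Fin n ⊕ Fin n) (Fin n ⊕ Fin n) ℝ, Xᵀ = X ∧
        (∀ x : Fin n ⊕ Fin n → ℝ, 0 ≤ x ⬝ᵥ X *ᵥ x) ∧
        (∀ i j, 0 ≤ X i j) ∧ (∑ i, ∑ j, X i j) = 1 ∧
        r = ∑ i, ∑ j, fromBlocks C (-C) (-C) C i j * X i j} ≤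
    sInf {r : ℝ | ∃ U : Matrix (Fin n) (Fin n) ℝ, Uᵀ = U ∧
        (∀ x : Fin n → ℝ, 0 ≤ x ⬝ᵥ U *ᵥ x) ∧
        (∀ i j, 0 ≤ U i j) ∧ (∑ i, ∑ j, U i j) = 1 ∧
        r = ∑ i, ∑ j, C i j * U i j} := by
  simp only [← copBound_eq_sInf]
  cases n
  exacts [by simp [copBound], stmt_9_general (fromBlocks C (-C) (-C) C) Sum.inl]
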